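/- Let α > -1/2 and set β = α, γ = α + 1/2, λ_n = n(n+2α+1), ν(n,k,α) = 2n + k + α + 1/2, K_α = Γ(α+1)/(2^{α+1/2} Γ(α+3/2)). Then for every t > 0 and x, y ∈ (-1,1): ∑_{m≥0} R_m^{-1} e^{-λ_m t} P_m^{α,α}(x) P_m^{α,α}(y) = √π K_α (e^{γ²t}/√t) ∑_{n,k ≥ 0} [Γ(ν(n,k,α)+1) (xy)^k / (k! n! Γ(α+n+1))] · [(1-x²)(1-y²)/4]ⁿ · (f_{T₁} ⋆ f_{C_{ν(n,k,α)}})(1/(2t)), where (f ⋆ g)(r) = ∫₀^r f(s) g(r-s) ds. -/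

import Mathlib

open scoped BigOperators

/-- Pochhammer symbol `(a)_k = a(a+1)⋯(a+k-1)` for real `a`. -/
noncomputable def poch (a : ℝ) (k : ℕ) : ℝ := (ascPochhammer ℝ k).eval a

/-- The Jacobi polynomial `P_n^{α,β}` as a function on `ℝ`. -/
noncomputable def jacobiP (α β : ℝ) (n : ℕ) : ℝ → ℝ := fun x =>
  (poch (α + 1) n / (Nat.factorial n : ℝ)) *
    ∑ k ∈ Finset.range (n + 1),
      (poch (-(n : ℝ)) k * poch ((n : ℝ) + α + β + 1) k) /
        (poch (α + 1) k * (Nat.factorial k : ℝ)) * ((1 - x) / 2) ^ k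

/-- The normalization constant
`R_n = [Γ(α+β+2)/(2n+α+β+1)] ⬝ [(α+1)_n (β+1)_n / (Γ(α+β+n+1) n!)]`. -/
noncomputable def Rn (α β : ℝ) (n : ℕ) : ℝ :=
  Real.Gamma (α + β + 2) / (2 * (n : ℝ) + α + β + 1) *
    (poch (α + 1) n * poch (β + 1) n / (Real.Gamma (α + β + (n : ℝ) + 1) * (Nat.factorial n : ℝ)))

/-- The density of the Lévy variable `C_h` (`h > 0`). -/
noncomputable def fC (h : ℝ) (s : ℝ) : ℝ :=
  (2 : ℝ) ^ h / Real.Gamma h *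
    ∑' p : ℕ, (-1 : ℝ) ^ p * (Real.Gamma ((p : ℝ) + h) / (Nat.factorial p : ℝ)) *
      ((2 * (p : ℝ) + h) / Real.sqrt (2 * Real.pi * s ^ 3)) *
      Real.exp (-(2 * (p : ℝ) + h) ^ 2 / (2 * s))

/-- The density of the Lévy variable `T₁`. -/
noncomputable def fT1 (s : ℝ) : ℝ :=
  ∑' k : ℕ, Real.exp (-Real.pi ^ 2 * ((k : ℝ) + 1 / 2) ^ 2 * s / 2)

/-- Convolution of functions on `(0,∞)`: `(f ⋆ g)(r) = ∫₀^r f(s) g(r-s) ds`. -/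
noncomputable def conv (f g : ℝ → ℝ) (r : ℝ) : ℝ := ∫ s in (0 : ℝ)..r, f s * g (r - s)


section USDpart1
open Real Filter Topology Set

/-- Gaussian kernel. -/
noncomputable def usdG (b s : ℝ) : ℝ := Real.exp (-b ^ 2 / (2 * s)) / Real.sqrt (2 * Real.pi * s)

/-- Inverse Gaussian kernel. -/
noncomputable def usdW (a s : ℝ) : ℝ :=
  a / Real.sqrt (2 * Real.pi * s ^ 3) * Real.exp (-a ^ 2 / (2 * s))

noncomputable def usdPhi (x : ℝ) : ℝ := ∫ u in (0 : ℝ)..x, Real.exp (-u ^ 2)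

lemma usdPhi_hasDerivAt (x : ℝ) : HasDerivAt usdPhi (Real.exp (-x ^ 2)) x := by
  have hc : Continuous (fun u : ℝ => Real.exp (-u ^ 2)) := by fun_prop
  exact intervalIntegral.integral_hasDerivAt_right (hc.intervalIntegrable _ _)
    hc.stronglyMeasurable.stronglyMeasurableAtFilter hc.continuousAt

lemma usdPhi_atTop : Tendsto usdPhi atTop (𝓝 (Real.sqrt Real.pi / 2)) := by
  have h := MeasureTheory.intervalIntegral_tendsto_integral_Ioi (μ := MeasureTheory.volume)
    (f := fun u : ℝ => Real.exp (-1 * u ^ 2)) (b := fun x : ℝ => x) (l := atTop) 0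
    ((integrable_exp_neg_mul_sq one_pos).integrableOn) tendsto_id
  rw [integral_gaussian_Ioi] at h
  have h' : Tendsto (fun x : ℝ => ∫ u in (0 : ℝ)..x, Real.exp (-u ^ 2)) atTop
      (𝓝 (Real.sqrt Real.pi / 2)) := by simpa using h
  exact h'

lemma usdPhi_neg (x : ℝ) : usdPhi (-x) = -usdPhi x := by
  have h := intervalIntegral.integral_comp_neg (f := fun u : ℝ => Real.exp (-u ^ 2)) (a := 0) (b := x)
  simp only [neg_zero, neg_sq] at h
  unfold usdPhi
  rw [h, intervalIntegral.integral_symm]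

lemma usdPhi_zero : usdPhi 0 = 0 := by simp [usdPhi]

lemma usdPhi_atBot : Tendsto usdPhi atBot (𝓝 (-(Real.sqrt Real.pi / 2))) := by
  have h := (usdPhi_atTop.comp tendsto_neg_atBot_atTop).neg
  refine h.congr fun x => ?_
  simp [usdPhi_neg]

lemma usdPhi_continuous : Continuous usdPhi :=
  continuous_iff_continuousAt.2 fun x => (usdPhi_hasDerivAt x).continuousAt

/-- Antiderivative used for the convolution. -/
noncomputable def usdAnti (a b r s : ℝ) : ℝ :=
  Real.sqrt (2 * r) / (2 * Real.pi * r) * Real.exp (-(a ^ 2 + b ^ 2) / (2 * r)) *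
    (Real.exp (a * b / r) *
        usdPhi ((a * (√s / √(r - s)) + b * (√(r - s) / √s)) / √(2 * r)) +
      Real.exp (-(a * b / r)) *
        usdPhi ((a * (√s / √(r - s)) - b * (√(r - s) / √s)) / √(2 * r)))

lemma usdAnti_hasDerivAt {a b r s : ℝ} (hs : s ∈ Ioo 0 r) :
    HasDerivAt (usdAnti a b r) (usdG b s * usdW a (r - s)) s := by
  obtain ⟨h0, hr⟩ := hs
  have hrs : 0 < r - s := by linarith
  have hr0 : 0 < r := by linarith
  have hp : 0 < √s := Real.sqrt_pos.2 h0
  have hq : 0 < √(r - s) := Real.sqrt_pos.2 hrs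
  have hR : 0 < √(2 * r) := Real.sqrt_pos.2 (by linarith)
  have hp2 : √s ^ 2 = s := Real.sq_sqrt h0.le
  have hq2 : √(r - s) ^ 2 = r - s := Real.sq_sqrt hrs.le
  have hR2 : √(2 * r) ^ 2 = 2 * r := Real.sq_sqrt (by linarith)
  have dp : HasDerivAt (fun s => √s) (1 / (2 * √s)) s := Real.hasDerivAt_sqrt h0.ne'
  have dq : HasDerivAt (fun s => √(r - s)) (-1 / (2 * √(r - s))) s := by
    have := ((hasDerivAt_id s).const_sub r).sqrt hrs.ne'
    simpa using this
  have d1 := (dp.div dq hq.ne').const_mul a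
  have d2 := (dq.div dp hp.ne').const_mul b
  have dP := (usdPhi_hasDerivAt ((a * (√s / √(r - s)) + b * (√(r - s) / √s)) / √(2 * r))).comp s
    ((d1.add d2).div_const (√(2 * r)))
  have dM := (usdPhi_hasDerivAt ((a * (√s / √(r - s)) - b * (√(r - s) / √s)) / √(2 * r))).comp s
    ((d1.sub d2).div_const (√(2 * r)))
  have key := ((dP.const_mul (Real.exp (a * b / r))).add
    (dM.const_mul (Real.exp (-(a * b / r))))).const_mul
      (Real.sqrt (2 * r) / (2 * Real.pi * r) * Real.exp (-(a ^ 2 + b ^ 2) / (2 * r)))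
  refine HasDerivAt.congr_deriv key ?_
  have e0 : r = √s ^ 2 + √(r - s) ^ 2 := by rw [hp2, hq2]; ring
  have s1 : √(2 * π * s) = √(2 * π) * √s := Real.sqrt_mul (by positivity) _
  have s2 : √(2 * π * (r - s) ^ 3) = √(2 * π) * √(r - s) ^ 3 := by
    rw [Real.sqrt_mul (by positivity)]
    congr 1
    rw [show (r - s) ^ 3 = (√(r - s) ^ 3) ^ 2 by rw [← pow_mul, mul_comm, pow_mul, hq2]]
    exact Real.sqrt_sq (by positivity)
  have s3 : √(2 * π) ^ 2 = 2 * π := Real.sq_sqrt (by positivity)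
  have s3p : 0 < √(2 * π) := Real.sqrt_pos.2 (by positivity)
  unfold usdG usdW
  rw [s1, s2]
  have hbs : -b ^ 2 / (2 * s) = -b ^ 2 / (2 * √s ^ 2) := by rw [hp2]
  have has : -a ^ 2 / (2 * (r - s)) = -a ^ 2 / (2 * √(r - s) ^ 2) := by rw [hq2]
  rw [hbs, has]
  set p := √s with hpdef
  set q := √(r - s) with hqdef
  set R := √(2 * r) with hRdef
  have E1 : Real.exp (a * b / r) * Real.exp (-((a * (p / q) + b * (q / p)) / R) ^ 2)
      = Real.exp (-(a ^ 2 * (p ^ 2 / q ^ 2) + b ^ 2 * (q ^ 2 / p ^ 2)) / (2 * r)) := by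
    rw [← Real.exp_add]; congr 1
    rw [div_pow, hR2]; field_simp; ring
  have E2 : Real.exp (-(a * b / r)) * Real.exp (-((a * (p / q) - b * (q / p)) / R) ^ 2)
      = Real.exp (-(a ^ 2 * (p ^ 2 / q ^ 2) + b ^ 2 * (q ^ 2 / p ^ 2)) / (2 * r)) := by
    rw [← Real.exp_add]; congr 1
    rw [div_pow, hR2]; field_simp; ring
  have E3 : Real.exp (-(a ^ 2 + b ^ 2) / (2 * r)) *
      Real.exp (-(a ^ 2 * (p ^ 2 / q ^ 2) + b ^ 2 * (q ^ 2 / p ^ 2)) / (2 * r)) =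
      Real.exp (-b ^ 2 / (2 * p ^ 2)) * Real.exp (-a ^ 2 / (2 * q ^ 2)) := by
    rw [← Real.exp_add, ← Real.exp_add]; congr 1
    rw [e0]; field_simp; ring
  rw [← mul_assoc (Real.exp (a * b / r)), ← mul_assoc (Real.exp (-(a * b / r))), E1, E2, ← mul_add]
  rw [show ∀ u v w z : ℝ, u * v * (w * z) = (v * w) * (u * z) by intros; ring, E3]
  have : R / (2 * π * r) * ((a * ((1 / (2 * p) * q - p * (-1 / (2 * q))) / q ^ 2) +
      b * ((-1 / (2 * q) * p - q * (1 / (2 * p))) / p ^ 2)) / R +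
      (a * ((1 / (2 * p) * q - p * (-1 / (2 * q))) / q ^ 2) -
      b * ((-1 / (2 * q) * p - q * (1 / (2 * p))) / p ^ 2)) / R) =
      a / (2 * π * (p * q ^ 3)) := by
    rw [← add_div, add_add_sub_cancel]
    have : (1 / (2 * p) * q - p * (-1 / (2 * q))) / q ^ 2 = r / (2 * p * q ^ 3) := by
      rw [e0]; field_simp; ring
    rw [this]; field_simp; ring
  rw [this]
  field_simp
  rw [s3]; ring

lemma usdAnti_right {a b r : ℝ} (ha : 0 < a) (hr : 0 < r) :
    Tendsto (usdAnti a b r) (𝓝[<] r) (𝓝 (Real.sqrt (2 * r) / (2 * Real.pi * r) *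
      Real.exp (-(a ^ 2 + b ^ 2) / (2 * r)) * (Real.exp (a * b / r) * (√π / 2) +
      Real.exp (-(a * b / r)) * (√π / 2)))) := by
  have hR : 0 < √(2 * r) := Real.sqrt_pos.2 (by linarith)
  have hq : Tendsto (fun s => √(r - s)) (𝓝[<] r) (𝓝[>] 0) := by
    apply tendsto_nhdsWithin_of_tendsto_nhds_of_eventually_within
    · have : Continuous (fun s => √(r - s)) := by fun_prop
      have h := this.tendsto r
      simp only [sub_self, Real.sqrt_zero] at h
      exact h.mono_left nhdsWithin_le_nhds
    · filter_upwards [self_mem_nhdsWithin] with s hs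
      exact Real.sqrt_pos.2 (sub_pos.2 hs)
  have hp : Tendsto (fun s => √s) (𝓝[<] r) (𝓝 (√r)) :=
    (Real.continuous_sqrt.tendsto r).mono_left nhdsWithin_le_nhds
  have hrp : 0 < √r := Real.sqrt_pos.2 hr
  have h1 : Tendsto (fun s => a * (√s / √(r - s))) (𝓝[<] r) atTop := by
    apply Tendsto.const_mul_atTop ha
    simp only [div_eq_mul_inv]
    exact Tendsto.pos_mul_atTop hrp hp (tendsto_inv_nhdsGT_zero.comp hq)
  have h2 : Tendsto (fun s => b * (√(r - s) / √s)) (𝓝[<] r) (𝓝 (b * (0 / √r))) :=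
    ((hq.mono_right nhdsWithin_le_nhds).div hp hrp.ne').const_mul b
  have hP := usdPhi_atTop.comp ((h1.atTop_add h2).atTop_div_const hR)
  have hM := usdPhi_atTop.comp ((h1.atTop_add h2.neg).atTop_div_const hR)
  have := ((hP.const_mul (Real.exp (a * b / r))).add
    (hM.const_mul (Real.exp (-(a * b / r))))).const_mul
      (Real.sqrt (2 * r) / (2 * Real.pi * r) * Real.exp (-(a ^ 2 + b ^ 2) / (2 * r)))
  refine this.congr fun s => ?_
  simp only [usdAnti, Function.comp, sub_eq_add_neg]

lemma usdAnti_left {a b r : ℝ} (hb : 0 ≤ b) (hr : 0 < r) :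
    ∃ l, Tendsto (usdAnti a b r) (𝓝[>] 0) (𝓝 l) ∧ 
      Real.sqrt (2 * r) / (2 * Real.pi * r) *
      Real.exp (-(a ^ 2 + b ^ 2) / (2 * r)) * (Real.exp (a * b / r) * (√π / 2) +
      Real.exp (-(a * b / r)) * (√π / 2)) - l = usdG (a + b) r := by
  have hR : 0 < √(2 * r) := Real.sqrt_pos.2 (by linarith)
  have hR2 : √(2 * r) ^ 2 = 2 * r := Real.sq_sqrt (by linarith)
  have hfin : Real.sqrt (2 * r) / (2 * Real.pi * r) * Real.exp (-(a ^ 2 + b ^ 2) / (2 * r)) *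
      (Real.exp (-(a * b / r)) * √π) = usdG (a + b) r := by
    have hE : Real.exp (-(a + b) ^ 2 / (2 * r)) = Real.exp (-(a ^ 2 + b ^ 2) / (2 * r)) *
      Real.exp (-(a * b / r)) := by
      rw [← Real.exp_add]; congr 1; field_simp; ring
    unfold usdG
    have hs : √(2 * π * r) = √(2 * r) * √π := by
      rw [← Real.sqrt_mul (by linarith)]; congr 1; ring
    have hpi : √π ^ 2 = π := Real.sq_sqrt (by positivity)
    have hpip : 0 < √π := Real.sqrt_pos.2 (by positivity)
    rw [hs, hE]
    have : √(2 * r) / (2 * π * r) * √π = 1 / (√(2 * r) * √π) := by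
      rw [show 2 * π * r = √(2 * r) ^ 2 * √π ^ 2 by rw [hR2, hpi]; ring]
      field_simp
    linear_combination (Real.exp (-(a ^ 2 + b ^ 2) / (2 * r)) * Real.exp (-(a * b / r))) * this
  have hp : Tendsto (fun s => √s) (𝓝[>] 0) (𝓝[>] 0) := by
    apply tendsto_nhdsWithin_of_tendsto_nhds_of_eventually_within
    · have h := Real.continuous_sqrt.tendsto 0
      simp only [Real.sqrt_zero] at h
      exact h.mono_left nhdsWithin_le_nhds
    · filter_upwards [self_mem_nhdsWithin] with s hs
      exact Real.sqrt_pos.2 hs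
  have hrp : 0 < √r := Real.sqrt_pos.2 hr
  have hq : Tendsto (fun s => √(r - s)) (𝓝[>] 0) (𝓝 (√r)) := by
    have : Continuous (fun s => √(r - s)) := by fun_prop
    have h := this.tendsto 0
    simp only [sub_zero] at h
    exact h.mono_left nhdsWithin_le_nhds
  have h1 : Tendsto (fun s => a * (√s / √(r - s))) (𝓝[>] 0) (𝓝 (a * (0 / √r))) :=
    ((hp.mono_right nhdsWithin_le_nhds).div hq hrp.ne').const_mul a
  rcases hb.eq_or_lt with rfl | hb
  · refine ⟨0, ?_, ?_⟩
    · have h3 := (usdPhi_continuous.tendsto _).comp (h1.div_const (√(2 * r)))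
      have h4 := (h3.const_mul (2 * (Real.sqrt (2 * r) / (2 * Real.pi * r) *
        Real.exp (-(a ^ 2 + 0 ^ 2) / (2 * r)))))
      simp only [zero_div, mul_zero, usdPhi_zero] at h4
      refine h4.congr fun s => ?_
      simp only [usdAnti, Function.comp, zero_mul, add_zero, sub_zero, mul_zero, zero_div, neg_zero,
        Real.exp_zero, one_mul]
      ring
    · rw [← hfin]; simp
  · refine ⟨√(2 * r) / (2 * Real.pi * r) * Real.exp (-(a ^ 2 + b ^ 2) / (2 * r)) *
      (Real.exp (a * b / r) * (√π / 2) + Real.exp (-(a * b / r)) * (-(√π / 2))), ?_, ?_⟩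
    · have h2 : Tendsto (fun s => b * (√(r - s) / √s)) (𝓝[>] 0) atTop := by
        apply Tendsto.const_mul_atTop hb
        simp only [div_eq_mul_inv]
        exact Tendsto.pos_mul_atTop hrp hq (tendsto_inv_nhdsGT_zero.comp hp)
      have hP := usdPhi_atTop.comp ((h1.add_atTop h2).atTop_div_const hR)
      have hM := usdPhi_atBot.comp
        ((h1.add_atBot (tendsto_neg_atTop_atBot.comp h2)).atBot_div_const hR)
      have := ((hP.const_mul (Real.exp (a * b / r))).add
        (hM.const_mul (Real.exp (-(a * b / r))))).const_mul
          (Real.sqrt (2 * r) / (2 * Real.pi * r) * Real.exp (-(a ^ 2 + b ^ 2) / (2 * r)))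
      refine this.congr fun s => ?_
      simp only [usdAnti, Function.comp, sub_eq_add_neg]
    · rw [← hfin]; ring

lemma usdG_nonneg (b s : ℝ) : 0 ≤ usdG b s := by unfold usdG; positivity

lemma usdW_nonneg {a : ℝ} (ha : 0 ≤ a) (s : ℝ) : 0 ≤ usdW a s := by unfold usdW; positivity

lemma usd_conv_int {a b r : ℝ} (ha : 0 < a) (hb : 0 ≤ b) (hr : 0 < r) :
    IntervalIntegrable (fun s => usdG b s * usdW a (r - s)) MeasureTheory.volume 0 r ∧
    ∫ s in (0 : ℝ)..r, usdG b s * usdW a (r - s) = usdG (a + b) r := by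
  obtain ⟨l, hl, hl'⟩ := usdAnti_left (a := a) hb hr
  have hR := usdAnti_right (b := b) ha hr
  have hd : ∀ s ∈ Ioo 0 r, HasDerivAt (usdAnti a b r) (usdG b s * usdW a (r - s)) s :=
    fun s hs => usdAnti_hasDerivAt hs
  have hI : IntervalIntegrable (fun s => usdG b s * usdW a (r - s)) MeasureTheory.volume 0 r := by
    rw [intervalIntegrable_iff_integrableOn_Ioc_of_le hr.le]
    have hc := continuousOn_Icc_extendFrom_Ioo
      (fun s hs => (hd s hs).continuousAt.continuousWithinAt) hl hR
    refine intervalIntegral.integrableOn_deriv_of_nonneg hc (fun s hs => ?_) (fun s _ =>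
      mul_nonneg (usdG_nonneg _ _) (usdW_nonneg ha.le _))
    refine (hd s hs).congr_of_eventuallyEq ?_
    filter_upwards [Ioo_mem_nhds hs.1 hs.2] with x hx
    exact extendFrom_eq (subset_closure hx)
      ((hd x hx).continuousAt.continuousWithinAt)
  refine ⟨hI, ?_⟩
  rw [intervalIntegral.integral_eq_sub_of_hasDerivAt_of_tendsto hr hd hI hl hR, hl']

end USDpart1

section USDpart2
open Real Filter Topology Set

lemma poch_zero' (c : ℝ) : poch c 0 = 1 := by simp [poch]

lemma poch_succ' (c : ℝ) (m : ℕ) : poch c (m + 1) = poch c m * (c + m) := by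
  simp [poch, ascPochhammer_succ_right]

lemma poch_pos' {c : ℝ} (hc : 0 < c) (m : ℕ) : 0 < poch c m := by
  induction m with
  | zero => simp [poch_zero']
  | succ n ih => rw [poch_succ']; positivity

lemma usd_Gamma_add {c : ℝ} (hc : 0 < c) (m : ℕ) : Real.Gamma (c + m) = poch c m * Real.Gamma c := by
  induction m with
  | zero => simp [poch_zero']
  | succ n ih =>
    rw [poch_succ', show c + ((n + 1 : ℕ) : ℝ) = (c + n) + 1 by push_cast; ring,
      Real.Gamma_add_one (by positivity), ih]; ring

lemma usd_bd {c D t : ℝ} (hc : 0 < c) (hD : 0 < D) (ht : 0 < t) :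
    ∃ C, 0 ≤ C ∧ ∀ m : ℕ, poch c m * D ^ m * Real.exp (-t * (m : ℝ) ^ 2) ≤ C * (1 / 2) ^ m := by
  set f : ℕ → ℝ := fun m => poch c m * (2 * D) ^ m * Real.exp (-t * (m : ℝ) ^ 2) with hf
  have hpos : ∀ m, 0 < f m := fun m => by
    have := poch_pos' hc m
    simp only [hf]; positivity
  have hlim : Tendsto (fun m : ℕ => (c + m) * (2 * D) * Real.exp (-t * (2 * m + 1))) atTop (𝓝 0) := by
    have hx : Tendsto (fun m : ℕ => 2 * t * (m : ℝ)) atTop atTop :=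
      tendsto_natCast_atTop_atTop.const_mul_atTop (by positivity)
    have h0 := (Real.tendsto_pow_mul_exp_neg_atTop_nhds_zero 0).comp hx
    have h1 := (Real.tendsto_pow_mul_exp_neg_atTop_nhds_zero 1).comp hx
    have h := (h0.const_mul (c * (2 * D) * Real.exp (-t))).add
      (h1.const_mul ((2 * D) * Real.exp (-t) / (2 * t)))
    simp only [mul_zero, add_zero] at h
    refine h.congr fun m => ?_
    simp only [Function.comp]
    rw [show -t * (2 * (m : ℝ) + 1) = -t + -(2 * t * m) by ring, Real.exp_add]
    field_simp
  have hs : Summable f := by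
    refine summable_of_ratio_test_tendsto_lt_one zero_lt_one
      (Eventually.of_forall fun m => (hpos m).ne') ?_
    refine hlim.congr fun m => ?_
    rw [Real.norm_of_nonneg (hpos _).le, Real.norm_of_nonneg (hpos _).le, eq_div_iff (hpos m).ne']
    simp only [hf]
    rw [poch_succ', pow_succ, show -t * ((m + 1 : ℕ) : ℝ) ^ 2 = -t * (2 * m + 1) + -t * (m : ℝ) ^ 2 by
      push_cast; ring, Real.exp_add]
    ring
  refine ⟨∑' m, f m, tsum_nonneg fun m => (hpos m).le, fun m => ?_⟩
  have h1 := hs.le_tsum m (fun j _ => (hpos j).le)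
  have : poch c m * D ^ m * Real.exp (-t * (m : ℝ) ^ 2) = f m * (1 / 2) ^ m := by
    simp only [hf]
    rw [mul_pow]
    have : (2 : ℝ) ^ m * (1 / 2) ^ m = 1 := by rw [← mul_pow]; norm_num
    linear_combination (-(poch c m * D ^ m * Real.exp (-t * (m : ℝ) ^ 2))) * this
  rw [this]
  gcongr

lemma usd_summable_exp {t : ℝ} (ht : 0 < t) : Summable (fun m : ℕ => Real.exp (-t * (m : ℝ) ^ 2)) := by
  obtain ⟨C, hC, h⟩ := usd_bd one_pos one_pos ht
  refine Summable.of_nonneg_of_le (fun m => (Real.exp_pos _).le) (fun m => ?_)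
    ((summable_geometric_two).mul_left C)
  refine le_trans ?_ (h m)
  have : 1 ≤ poch 1 m := by
    induction m with
    | zero => simp [poch_zero']
    | succ n ih =>
      rw [poch_succ']
      have : (1 : ℝ) ≤ 1 + n := by simp
      nlinarith
  rw [one_pow, mul_one]
  exact le_mul_of_one_le_left (Real.exp_pos _).le this

noncomputable def usdEps (j : ℕ) : ℝ := if j = 0 then 1 else 2 * (-1) ^ j

lemma usdEps_abs_le (j : ℕ) : |usdEps j| ≤ 2 := by
  unfold usdEps; split_ifs <;> simp [abs_mul]

lemma usd_theta {s : ℝ} (hs : 0 < s) :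
    fT1 s = ∑' j : ℕ, usdEps j * usdG (2 * j) s := by
  set A : ℝ := 2 / (π * s) with hA
  have hApos : 0 < A := by positivity
  have hP := Complex.tsum_exp_neg_quadratic (a := (A : ℂ)) (by simpa using hApos) (-Complex.I / 2)
  -- left side
  set F : ℤ → ℝ := fun n => (-1) ^ n.natAbs * Real.exp (-(2 / s) * (n : ℝ) ^ 2) with hF
  set H : ℤ → ℝ := fun n => Real.exp (-Real.pi ^ 2 * ((n : ℝ) + 1 / 2) ^ 2 * s / 2) with hH
  have hL : ∀ n : ℤ, Complex.exp (-π * A * (n : ℂ) ^ 2 + 2 * π * (-Complex.I / 2) * n) = ((F n : ℝ) : ℂ) := by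
    intro n
    rw [Complex.exp_add]
    simp only [hF]
    push_cast
    rw [mul_comm]
    congr 1
    · rw [show (2 * π * (-Complex.I / 2) * n : ℂ) = (-n : ℤ) * (π * Complex.I) by push_cast; ring,
        Complex.exp_int_mul, Complex.exp_pi_mul_I]
      obtain ⟨k, rfl | rfl⟩ := Int.eq_nat_or_neg n
      · simp only [zpow_neg, zpow_natCast, Int.natAbs_natCast]
        rw [← inv_pow]; norm_num
      · simp
    · congr 1
      rw [hA]; push_cast
      have : (π : ℂ) ≠ 0 := by exact_mod_cast Real.pi_ne_zero
      have : (s : ℂ) ≠ 0 := by exact_mod_cast hs.ne'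
      field_simp
  have hR : ∀ n : ℤ, Complex.exp (-π / A * ((n : ℂ) + Complex.I * (-Complex.I / 2)) ^ 2) = ((H n : ℝ) : ℂ) := by
    intro n
    simp only [hH]
    push_cast
    congr 1
    rw [show Complex.I * (-Complex.I / 2) = 1 / 2 by
      rw [mul_div_assoc', mul_neg, Complex.I_mul_I]; norm_num]
    rw [hA]; push_cast
    have : (π : ℂ) ≠ 0 := by exact_mod_cast Real.pi_ne_zero
    have : (s : ℂ) ≠ 0 := by exact_mod_cast hs.ne'
    field_simp
  simp_rw [hL, hR] at hP
  rw [← Complex.ofReal_tsum, ← Complex.ofReal_tsum,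
    show ((1 : ℂ) / 2) = ((1 / 2 : ℝ) : ℂ) by push_cast; rfl, ← Complex.ofReal_cpow hApos.le] at hP
  rw [← Real.sqrt_eq_rpow] at hP
  have hP' : ∑' n, F n = 1 / √A * ∑' n, H n := by exact_mod_cast hP
  have hHs : Summable (fun n : ℕ => H n) := by
    refine Summable.of_nonneg_of_le (fun m => (Real.exp_pos _).le) (fun m => ?_)
      (usd_summable_exp (t := π ^ 2 * s / 2) (by positivity))
    simp only [hH]
    apply Real.exp_le_exp.2
    have : (m : ℝ) ^ 2 ≤ ((m : ℝ) + 1 / 2) ^ 2 := by gcongr; linarith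
    have h3 : 0 < π ^ 2 * s / 2 := by positivity
    push_cast
    nlinarith
  have hHn : ∀ n : ℕ, H (-(n + 1)) = H n := by
    intro n
    simp only [hH]
    push_cast
    congr 1; ring
  have hHsum : ∑' n, H n = 2 * fT1 s := by
    rw [tsum_of_nat_of_neg_add_one hHs (by simpa only [hHn] using hHs)]
    simp only [hHn]
    rw [← two_mul]
    rfl
  have hFs : Summable (fun n : ℕ => F n) := by
    refine Summable.of_norm_bounded (usd_summable_exp (t := 2 / s) (by positivity)) fun m => ?_
    simp [hF]
  have hFn : ∀ n : ℕ, F (-(n + 1)) = F ((n + 1 : ℕ)) := by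
    intro n
    simp only [hF]
    rw [Int.natAbs_neg]
    push_cast
    rw [neg_sq]
  have hFs1 : Summable (fun n : ℕ => F ((n + 1 : ℕ))) := (summable_nat_add_iff 1).2 hFs
  have hFsum : ∑' n, F n = F 0 + 2 * ∑' n : ℕ, F ((n + 1 : ℕ)) := by
    rw [tsum_of_nat_of_neg_add_one hFs (by simpa only [hFn] using hFs1)]
    simp only [hFn]
    rw [hFs.tsum_eq_zero_add]
    push_cast; ring
  have hG : ∀ j : ℕ, usdEps j * usdG (2 * j) s = (1 / √(2 * π * s)) * ((if j = 0 then 1 else 2) * F j) := by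
    intro j
    simp only [usdEps, usdG, hF, Int.natAbs_natCast]
    rw [show -(2 * (j : ℝ)) ^ 2 / (2 * s) = -(2 / s) * ((j : ℤ) : ℝ) ^ 2 by push_cast; field_simp]
    split_ifs with h
    · simp [h]; 
    · ring
  simp_rw [hG]
  rw [tsum_mul_left]
  have hsum2 : Summable (fun j : ℕ => (if j = 0 then (1 : ℝ) else 2) * F j) := by
    refine Summable.of_norm_bounded (hFs.norm.mul_left 2) fun j => ?_
    rw [norm_mul]
    gcongr
    split_ifs <;> simp
  rw [hsum2.tsum_eq_zero_add]
  simp only [if_true, Nat.add_eq_zero_iff, one_ne_zero, and_false, if_false, tsum_mul_left, one_mul]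
  rw [Nat.cast_zero, ← hFsum, hP', hHsum]
  have hq : √(2 * π * s) * √A = 2 := by
    rw [← Real.sqrt_mul (by positivity), hA, show 2 * π * s * (2 / (π * s)) = 2 ^ 2 by field_simp]
    exact Real.sqrt_sq (by norm_num)
  have h1 : 0 < √(2 * π * s) := Real.sqrt_pos.2 (by positivity)
  have h2 : 0 < √A := Real.sqrt_pos.2 hApos
  rw [← mul_assoc, ← mul_assoc]
  have : 1 / √(2 * π * s) * (1 / √A) * 2 = 1 := by
    rw [div_mul_div_comm, hq]; norm_num
  rw [this, one_mul]

end USDpart2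

section USDpart3
open Real Filter Topology Set

lemma usd_regroup {ι : Type*} (f : ι → ℝ) (hf : Summable f) (d : ι → ℕ) (S : ℕ → Finset ι)
    (hS : ∀ m i, i ∈ S m ↔ d i = m) : ∑' i, f i = ∑' m, ∑ i ∈ S m, f i := by
  have h := (hf.hasSum.tsum_fiberwise d).tsum_eq
  rw [← h]
  refine tsum_congr fun m => ?_
  have : d ⁻¹' {m} = (S m : Set ι) := by
    ext i; simp [hS]
  rw [this]
  exact Finset.tsum_subtype (S m) f

lemma poch_le_succ_left {h : ℝ} (hh : 0 < h) (p : ℕ) : poch h p ≤ poch (h + 1) p := by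
  induction p with
  | zero => simp [poch_zero']
  | succ n ih =>
    rw [poch_succ', poch_succ']
    have := poch_pos' hh n
    gcongr <;> linarith

lemma poch_mono_right {h : ℝ} (hh : 0 < h) : Monotone (fun p => poch (h + 1) p) := by
  refine monotone_nat_of_le_succ fun n => ?_
  rw [poch_succ']
  have := poch_pos' (c := h + 1) (by linarith) n
  have h2 : (0 : ℝ) ≤ n := by positivity
  nlinarith

lemma poch_shift (h : ℝ) (p : ℕ) : poch h p * (h + p) = h * poch (h + 1) p := by
  rw [← poch_succ']
  induction p with
  | zero => simp [poch_succ', poch_zero']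
  | succ n ih => rw [poch_succ', ih, poch_succ' (h + 1)]; push_cast; ring

noncomputable def usdC (h : ℝ) (p : ℕ) : ℝ :=
  (2 : ℝ) ^ h / Real.Gamma h * ((-1 : ℝ) ^ p * (Real.Gamma ((p : ℝ) + h) / (Nat.factorial p : ℝ)))

lemma usdC_abs {h : ℝ} (hh : 0 < h) (p : ℕ) : |usdC h p| ≤ (2 : ℝ) ^ h * poch h p := by
  unfold usdC
  have hG := Real.Gamma_pos_of_pos hh
  have hp := poch_pos' hh p
  rw [add_comm, usd_Gamma_add hh, abs_mul, abs_mul, abs_pow, abs_neg, abs_one, one_pow, one_mul,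
    abs_of_pos (by positivity), abs_of_pos (by positivity)]
  have : (1 : ℝ) ≤ Nat.factorial p := by exact_mod_cast Nat.one_le_iff_ne_zero.2 (Nat.factorial_ne_zero p)
  calc _ = 2 ^ h * (poch h p / Nat.factorial p) := by field_simp
    _ ≤ _ := by
      gcongr
      exact div_le_self hp.le this

lemma usd_fC_eq (h u : ℝ) : fC h u = ∑' p : ℕ, usdC h p * usdW (2 * p + h) u := by
  unfold fC usdC usdW
  rw [← tsum_mul_left]
  refine tsum_congr fun p => ?_
  ring

lemma usd_summable_T {s : ℝ} (hs : 0 < s) : Summable (fun j : ℕ => usdEps j * usdG (2 * j) s) := by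
  refine Summable.of_norm_bounded
    ((usd_summable_exp (t := 2 / s) (by positivity)).mul_left (2 / √(2 * π * s))) fun j => ?_
  rw [norm_mul, Real.norm_eq_abs, Real.norm_of_nonneg (usdG_nonneg _ _)]
  calc _ ≤ 2 * usdG (2 * j) s := by
        gcongr
        · exact usdG_nonneg _ _
        · exact usdEps_abs_le j
    _ = _ := by
      unfold usdG
      rw [show -(2 * (j : ℝ)) ^ 2 / (2 * s) = -(2 / s) * (j : ℝ) ^ 2 by field_simp]
      ring

lemma usd_summable_C {h u : ℝ} (hh : 0 < h) (hu : 0 < u) :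
    Summable (fun p : ℕ => usdC h p * usdW (2 * p + h) u) := by
  obtain ⟨C, hC, hb⟩ := usd_bd (c := h + 1) (D := 1) (t := 2 / u) (by linarith) one_pos (by positivity)
  refine Summable.of_norm_bounded ((summable_geometric_two).mul_left
    (2 ^ h * (2 * h) / √(2 * π * u ^ 3) * C)) fun p => ?_
  rw [norm_mul, Real.norm_eq_abs, Real.norm_of_nonneg (usdW_nonneg (by positivity) _)]
  have hp := poch_pos' hh p
  have hW : usdW (2 * p + h) u ≤ 2 * (h + p) / √(2 * π * u ^ 3) * Real.exp (-(2 / u) * (p : ℝ) ^ 2) := by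
    unfold usdW
    gcongr
    · linarith
    · have : -(2 / u) * (p : ℝ) ^ 2 = -(2 * (p : ℝ)) ^ 2 / (2 * u) := by field_simp
      rw [this]
      gcongr
      linarith
  calc _ ≤ (2 ^ h * poch h p) * (2 * (h + p) / √(2 * π * u ^ 3) * Real.exp (-(2 / u) * (p : ℝ) ^ 2)) := by
        gcongr
        · exact usdW_nonneg (by positivity) _
        · exact usdC_abs hh p
    _ = 2 ^ h * (2 * h) / √(2 * π * u ^ 3) * (poch (h + 1) p * 1 ^ p * Real.exp (-(2 / u) * (p : ℝ) ^ 2)) := by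
        rw [one_pow, mul_one]
        linear_combination (2 ^ h * (2 / √(2 * π * u ^ 3) * Real.exp (-(2 / u) * (p : ℝ) ^ 2))) * poch_shift h p
    _ ≤ 2 ^ h * (2 * h) / √(2 * π * u ^ 3) * (C * (1 / 2) ^ p) := by
        exact mul_le_mul_of_nonneg_left (hb p) (by positivity)
    _ = _ := by ring

lemma usd_summable_half2 : Summable (fun z : ℕ × ℕ => (1 / 2 : ℝ) ^ (z.1 + z.2)) := by
  have := (summable_geometric_two).mul_of_nonneg (summable_geometric_two)
    (fun n => by positivity) (fun n => by positivity)
  refine this.congr fun z => ?_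
  rw [pow_add]

lemma usd_summable_double {h r : ℝ} (hh : 0 < h) (hr : 0 < r) :
    Summable (fun z : ℕ × ℕ => |usdEps z.1 * usdC h z.2| * usdG (2 * z.2 + h + 2 * z.1) r) := by
  obtain ⟨C, hC, hb⟩ := usd_bd (c := h + 1) (D := 1) (t := 2 / r) (by linarith) one_pos (by positivity)
  refine Summable.of_nonneg_of_le (fun z => mul_nonneg (abs_nonneg _) (usdG_nonneg _ _)) (fun z => ?_)
    (usd_summable_half2.mul_left (2 * 2 ^ h / √(2 * π * r) * C))
  obtain ⟨j, p⟩ := z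
  simp only
  have hp := poch_pos' hh p
  have hG : usdG (2 * p + h + 2 * j) r ≤ Real.exp (-(2 / r) * ((j + p : ℕ) : ℝ) ^ 2) / √(2 * π * r) := by
    unfold usdG
    have : -(2 / r) * ((j + p : ℕ) : ℝ) ^ 2 = -(2 * ((j + p : ℕ) : ℝ)) ^ 2 / (2 * r) := by field_simp
    rw [this]
    gcongr
    push_cast
    linarith
  have hpp : poch h p ≤ poch (h + 1) (j + p) :=
    (poch_le_succ_left hh p).trans (poch_mono_right hh (Nat.le_add_left p j))
  rw [abs_mul]
  calc _ ≤ (2 * (2 ^ h * poch (h + 1) (j + p))) *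
      (Real.exp (-(2 / r) * ((j + p : ℕ) : ℝ) ^ 2) / √(2 * π * r)) := by
        have h1 : |usdC h p| ≤ 2 ^ h * poch (h + 1) (j + p) := (usdC_abs hh p).trans (by gcongr)
        have h2 := usdEps_abs_le j
        have h3 := poch_pos' (c := h + 1) (by linarith) (j + p)
        refine mul_le_mul (mul_le_mul h2 h1 (abs_nonneg _) (by norm_num)) hG (usdG_nonneg _ _)
          (by positivity)
    _ = 2 * 2 ^ h / √(2 * π * r) * (poch (h + 1) (j + p) * 1 ^ (j + p) *
        Real.exp (-(2 / r) * ((j + p : ℕ) : ℝ) ^ 2)) := by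
        rw [one_pow]; ring
    _ ≤ 2 * 2 ^ h / √(2 * π * r) * (C * (1 / 2) ^ (j + p)) := by
        exact mul_le_mul_of_nonneg_left (hb _) (by positivity)
    _ = _ := by ring

lemma usd_sum_gamma {h : ℝ} (hh : 0 < h) (q : ℕ) :
    ∑ p ∈ Finset.range q, Real.Gamma ((p : ℝ) + h) / (Nat.factorial p : ℝ) =
      q / h * (Real.Gamma ((q : ℝ) + h) / (Nat.factorial q : ℝ)) := by
  induction q with
  | zero => simp
  | succ n ih =>
    rw [Finset.sum_range_succ, ih, Nat.factorial_succ,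
      show ((n + 1 : ℕ) : ℝ) + h = ((n : ℝ) + h) + 1 by push_cast; ring,
      Real.Gamma_add_one (by positivity)]
    have : (Nat.factorial n : ℝ) ≠ 0 := by exact_mod_cast Nat.factorial_ne_zero n
    push_cast
    field_simp

lemma usd_antidiag {h : ℝ} (hh : 0 < h) (q : ℕ) :
    ∑ z ∈ Finset.HasAntidiagonal.antidiagonal q, usdEps z.1 * usdC h z.2 = (2 * q + h) / h * usdC h q := by
  rw [← Finset.Nat.sum_antidiagonal_swap]
  simp only [Prod.fst_swap, Prod.snd_swap]
  rw [Finset.Nat.sum_antidiagonal_eq_sum_range_succ_mk, Finset.sum_range_succ]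
  have : ∀ p ∈ Finset.range q, usdEps (q - p) * usdC h p =
      (2 * (2 : ℝ) ^ h / Real.Gamma h * (-1) ^ q) * (Real.Gamma ((p : ℝ) + h) / (Nat.factorial p : ℝ)) := by
    intro p hp
    have hp' : p < q := Finset.mem_range.1 hp
    unfold usdEps usdC
    rw [if_neg (by omega)]
    have : (-1 : ℝ) ^ q = (-1) ^ (q - p) * (-1) ^ p := by rw [← pow_add]; congr 1; omega
    rw [this]; ring
  rw [Finset.sum_congr rfl this, ← Finset.mul_sum, usd_sum_gamma hh]
  simp only [usdEps, Nat.sub_self, if_true]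
  unfold usdC
  field_simp

lemma usd_conv {h r : ℝ} (hh : 0 < h) (hr : 0 < r) :
    conv fT1 (fC h) r = ∑' q : ℕ, (2 * q + h) / h * usdC h q * usdG (2 * q + h) r := by
  unfold conv
  rw [intervalIntegral.integral_of_le hr.le, MeasureTheory.integral_Ioc_eq_integral_Ioo]
  set F : ℕ × ℕ → ℝ → ℝ := fun z s =>
    (usdEps z.1 * usdC h z.2) * (usdG (2 * z.1) s * usdW (2 * z.2 + h) (r - s)) with hF
  have hcongr : ∀ s ∈ Ioo (0 : ℝ) r, fT1 s * fC h (r - s) = ∑' z, F z s := by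
    intro s hs
    have hrs : 0 < r - s := by linarith [hs.2]
    rw [usd_theta hs.1, usd_fC_eq, tsum_mul_tsum_of_summable_norm (usd_summable_T hs.1).norm
      (usd_summable_C hh hrs).norm]
    refine tsum_congr fun z => ?_
    simp only [hF]; ring
  rw [MeasureTheory.setIntegral_congr_fun measurableSet_Ioo hcongr]
  have hci : ∀ z : ℕ × ℕ, MeasureTheory.IntegrableOn
      (fun s => usdG (2 * z.1) s * usdW (2 * z.2 + h) (r - s)) (Ioo 0 r) ∧
      ∫ s in Ioo 0 r, usdG (2 * z.1) s * usdW (2 * z.2 + h) (r - s) = usdG (2 * z.2 + h + 2 * z.1) r := by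
    intro z
    obtain ⟨h1, h2⟩ := usd_conv_int (a := 2 * z.2 + h) (b := 2 * z.1) (r := r)
      (by positivity) (by positivity) hr
    rw [intervalIntegrable_iff_integrableOn_Ioo_of_le hr.le] at h1
    rw [intervalIntegral.integral_of_le hr.le, MeasureTheory.integral_Ioc_eq_integral_Ioo] at h2
    exact ⟨h1, h2⟩
  have hsum := MeasureTheory.hasSum_integral_of_summable_integral_norm
    (μ := MeasureTheory.volume.restrict (Ioo 0 r)) (F := F)
    (fun z => (hci z).1.const_mul _) (by
      refine (usd_summable_double hh hr).congr fun z => ?_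
      rw [← (hci z).2, ← MeasureTheory.integral_const_mul]
      congr 1
      ext s
      simp only [hF, norm_mul, Real.norm_eq_abs, abs_mul]
      rw [abs_of_nonneg (usdG_nonneg _ _), abs_of_nonneg (usdW_nonneg (by positivity) _)])
  rw [← hsum.tsum_eq]
  have hterm : ∀ z : ℕ × ℕ, ∫ s in Ioo 0 r, F z s =
      (usdEps z.1 * usdC h z.2) * usdG (2 * z.2 + h + 2 * z.1) r := by
    intro z
    simp only [hF]
    rw [MeasureTheory.integral_const_mul, (hci z).2]
  simp_rw [hterm]
  rw [usd_regroup _ (Summable.of_norm (by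
    refine (usd_summable_double hh hr).congr fun z => ?_
    rw [norm_mul, Real.norm_eq_abs, Real.norm_of_nonneg (usdG_nonneg _ _)])) (fun z => z.1 + z.2)
    (fun m => Finset.HasAntidiagonal.antidiagonal m) (fun m z => Finset.HasAntidiagonal.mem_antidiagonal)]
  refine tsum_congr fun q => ?_
  rw [← usd_antidiag hh, Finset.sum_mul]
  refine Finset.sum_congr rfl fun z hz => ?_
  rw [← Finset.HasAntidiagonal.mem_antidiagonal.1 hz]
  push_cast
  congr 2
  ring

end USDpart3

section USDpart4
open Polynomial

noncomputable def usdTm (y : ℝ) (k n : ℕ) : ℝ[X] :=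
  (C y * (1 - C 2 * X)) ^ k * (C (1 - y ^ 2) * (C 4 * (X * (1 - X)))) ^ n

/-- Four times the hypergeometric operator. -/
noncomputable def usdL (α : ℝ) (p : ℝ[X]) : ℝ[X] :=
  X * (1 - X) * derivative (derivative p) + C (α + 1) * (1 - C 2 * X) * derivative p

lemma usdL_term (α y u : ℝ) (k n : ℕ) :
    (usdL α (usdTm y k n)).eval u =
      (k : ℝ) * (k - 1) * y ^ 2 * ((y * (1 - 2 * u)) ^ (k - 2) *
          ((1 - y ^ 2) * (4 * (u * (1 - u)))) ^ n) * (4 * (u * (1 - u)))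
      + 4 * n * (n + α) * (1 - y ^ 2) * ((y * (1 - 2 * u)) ^ k *
          ((1 - y ^ 2) * (4 * (u * (1 - u)))) ^ (n - 1))
      - (2 * n * (2 * k + 1) + 4 * n * (n + α) + (2 * α + 2) * k) *
        ((y * (1 - 2 * u)) ^ k * ((1 - y ^ 2) * (4 * (u * (1 - u)))) ^ n) := by
  unfold usdL usdTm
  rcases k with _ | _ | k <;> rcases n with _ | _ | n <;>
  simp [derivative_pow, derivative_mul] <;> ring

lemma usdL_coeff {α c : ℝ} {p : ℝ[X]} (h : usdL α p + C c * p = 0) (k : ℕ) :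
    ((k : ℝ) + 1) * (k + 1 + α) * p.coeff (k + 1) = (k * (k + 2 * α + 1) - c) * p.coeff k := by
  have h1 := congrArg (fun q => q.coeff k) h
  have e : usdL α p + C c * p = X * derivative (derivative p) - X * (X * derivative (derivative p))
     + C (α + 1) * derivative p - C (2 * (α + 1)) * (X * derivative p) + C c * p := by
    unfold usdL
    simp only [C_mul]
    ring
  rw [e] at h1
  obtain ⟨c1, hc1⟩ : ∃ c1, c1 = α + 1 := ⟨_, rfl⟩
  obtain ⟨c2, hc2⟩ : ∃ c2, c2 = 2 * (α + 1) := ⟨_, rfl⟩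
  rw [← hc2, ← hc1] at h1
  rcases k with _ | _ | k
  · simp [coeff_derivative] at h1 ⊢
    rw [hc1] at h1
    linarith
  · simp [coeff_derivative, coeff_X_mul] at h1 ⊢
    rw [hc1, hc2] at h1
    linarith
  · simp [coeff_derivative, coeff_X_mul] at h1 ⊢
    rw [hc1, hc2] at h1
    linarith

lemma usd_poch_neg (m k : ℕ) (h : m < k) : poch (-(m : ℝ)) k = 0 := by
  induction k, h using Nat.le_induction with
  | base => rw [poch_succ']; simp
  | succ n hn ih => rw [poch_succ', ih, zero_mul]

lemma usd_poch_neg_self (m : ℕ) : poch (-(m : ℝ)) m = (-1) ^ m * (Nat.factorial m : ℝ) := by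
  have : ∀ k ≤ m, poch (-(m : ℝ)) k * (Nat.factorial (m - k) : ℝ) = (-1) ^ k * (Nat.factorial m : ℝ) := by
    intro k
    induction k with
    | zero => simp [poch_zero']
    | succ k ih =>
      intro hk
      have h := ih (by omega)
      rw [poch_succ', pow_succ]
      obtain ⟨j, rfl⟩ : ∃ j, m = k + 1 + j := ⟨m - (k + 1), by omega⟩
      rw [show k + 1 + j - k = j + 1 by omega, Nat.factorial_succ] at h
      rw [show k + 1 + j - (k + 1) = j by omega]
      push_cast at h ⊢
      linear_combination (-1) * h
  simpa using this m le_rfl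

noncomputable def usdHc (α : ℝ) (m k : ℕ) : ℝ :=
  (poch (-(m : ℝ)) k * poch ((m : ℝ) + α + α + 1) k) / (poch (α + 1) k * (Nat.factorial k : ℝ))

lemma usdL_coeff_eq {α : ℝ} (hα : -(1 / 2 : ℝ) < α) {m : ℕ} {p : ℝ[X]}
    (h : usdL α p + C ((m : ℝ) * (m + 2 * α + 1)) * p = 0) (k : ℕ) :
    p.coeff k = p.coeff 0 * usdHc α m k := by
  induction k with
  | zero => simp [usdHc, poch_zero']
  | succ k ih =>
    have h1 := usdL_coeff h k
    have hp := poch_pos' (c := α + 1) (by linarith) k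
    have hf : (0 : ℝ) < Nat.factorial k := by exact_mod_cast Nat.factorial_pos k
    have hk : (0 : ℝ) ≤ k := by positivity
    have hne : ((k : ℝ) + 1) * (k + 1 + α) ≠ 0 := by
      have : 0 < (k : ℝ) + 1 + α := by linarith
      positivity
    have hne2 : (k : ℝ) + 1 + α ≠ 0 := by linarith
    apply mul_left_cancel₀ hne
    rw [h1, ih]
    unfold usdHc
    rw [poch_succ', poch_succ', poch_succ', Nat.factorial_succ]
    push_cast
    rw [show α + 1 + (k : ℝ) = k + 1 + α by ring]
    field_simp
    ring

lemma usdL_eval {α : ℝ} (hα : -(1 / 2 : ℝ) < α) {m : ℕ} {p : ℝ[X]}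
    (h : usdL α p + C ((m : ℝ) * (m + 2 * α + 1)) * p = 0) (x : ℝ) :
    p.eval ((1 - x) / 2) * (poch (α + 1) m / (Nat.factorial m : ℝ)) =
      p.eval 0 * jacobiP α α m x := by
  have hd : p.natDegree < m + 1 := by
    rw [Nat.lt_succ_iff, natDegree_le_iff_coeff_eq_zero]
    intro N hN
    rw [usdL_coeff_eq hα h, usdHc, usd_poch_neg m N hN]
    simp
  rw [eval_eq_sum_range' hd, ← coeff_zero_eq_eval_zero]
  unfold jacobiP
  rw [mul_left_comm, mul_comm]
  congr 1
  rw [Finset.mul_sum]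
  refine Finset.sum_congr rfl fun k _ => ?_
  rw [usdL_coeff_eq hα h k]
  unfold usdHc
  ring

noncomputable def usdCf (α : ℝ) (m n q : ℕ) : ℝ :=
  if 2 * n + 2 * q ≤ m then
    2 ^ (m - 2 * n - 2 * q) * (-1) ^ q * Real.Gamma ((m : ℝ) + (α + 1 / 2) - q) /
      ((Nat.factorial (m - 2 * n - 2 * q) : ℝ) * (Nat.factorial n : ℝ) * (Nat.factorial q : ℝ) *
        Real.Gamma (α + n + 1)) else 0

lemma usdCf_shift_n {α : ℝ} (hα : -(1 / 2 : ℝ) < α) (m n q : ℕ) :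
    usdCf α m (n + 1) q * (4 * ((n : ℝ) + 1) * (n + 1 + α)) =
      usdCf α m n q * (((m - 2 * n - 2 * q : ℕ) : ℝ) * (((m - 2 * n - 2 * q : ℕ) : ℝ) - 1)) := by
  unfold usdCf
  by_cases h : 2 * n + 2 * q + 2 ≤ m
  · obtain ⟨k, rfl⟩ : ∃ k, m = k + 2 + 2 * n + 2 * q := ⟨m - (2 * n + 2 * q + 2), by omega⟩
    rw [if_pos (by omega), if_pos (by omega)]
    rw [show k + 2 + 2 * n + 2 * q - 2 * (n + 1) - 2 * q = k by omega,
      show k + 2 + 2 * n + 2 * q - 2 * n - 2 * q = k + 2 by omega]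
    have hn : (0 : ℝ) ≤ n := by positivity
    have hk : (0 : ℝ) ≤ k := by positivity
    rw [show α + ((n + 1 : ℕ) : ℝ) + 1 = (α + n + 1) + 1 by push_cast; ring,
      Real.Gamma_add_one (by linarith), Nat.factorial_succ n, Nat.factorial_succ (k + 1),
      Nat.factorial_succ k]
    have h1 := Real.Gamma_pos_of_pos (show 0 < α + n + 1 by linarith)
    have h2 : (0 : ℝ) < Nat.factorial k := by exact_mod_cast Nat.factorial_pos k
    have h3 : (0 : ℝ) < Nat.factorial n := by exact_mod_cast Nat.factorial_pos n
    have h4 : (0 : ℝ) < Nat.factorial q := by exact_mod_cast Nat.factorial_pos q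
    have h5 : α + n + 1 ≠ 0 := by linarith
    push_cast
    rw [show (n : ℝ) + 1 + α = α + n + 1 by ring]
    field_simp
    ring
  · rw [if_neg (by omega)]
    by_cases h' : 2 * n + 2 * q ≤ m
    · have : m - 2 * n - 2 * q = 0 ∨ m - 2 * n - 2 * q = 1 := by omega
      rcases this with h | h <;> simp [h]
    · rw [if_neg h']; simp

lemma usdCf_shift_q {α : ℝ} (hα : -(1 / 2 : ℝ) < α) (m n q : ℕ) :
    usdCf α m n (q + 1) * (-(4 * ((q : ℝ) + 1) * (m + (α + 1 / 2) - (q + 1)))) =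
      usdCf α m n q * (((m - 2 * n - 2 * q : ℕ) : ℝ) * (((m - 2 * n - 2 * q : ℕ) : ℝ) - 1)) := by
  unfold usdCf
  by_cases h : 2 * n + 2 * q + 2 ≤ m
  · obtain ⟨k, rfl⟩ : ∃ k, m = k + 2 + 2 * n + 2 * q := ⟨m - (2 * n + 2 * q + 2), by omega⟩
    rw [if_pos (by omega), if_pos (by omega)]
    rw [show k + 2 + 2 * n + 2 * q - 2 * n - 2 * (q + 1) = k by omega,
      show k + 2 + 2 * n + 2 * q - 2 * n - 2 * q = k + 2 by omega]
    have hn : (0 : ℝ) ≤ n := by positivity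
    have hk : (0 : ℝ) ≤ k := by positivity
    have hq : (0 : ℝ) ≤ q := by positivity
    have hG : Real.Gamma (((k + 2 + 2 * n + 2 * q : ℕ) : ℝ) + (α + 1 / 2) - q) =
        (((k + 2 + 2 * n + 2 * q : ℕ) : ℝ) + (α + 1 / 2) - (q + 1 : ℕ)) *
        Real.Gamma (((k + 2 + 2 * n + 2 * q : ℕ) : ℝ) + (α + 1 / 2) - (q + 1 : ℕ)) := by
      rw [← Real.Gamma_add_one (by push_cast; linarith)]
      congr 1
      push_cast; ring
    rw [hG, Nat.factorial_succ q, Nat.factorial_succ (k + 1),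
      Nat.factorial_succ k]
    have h1 := Real.Gamma_pos_of_pos (show 0 < α + n + 1 by linarith)
    have h2 : (0 : ℝ) < Nat.factorial k := by exact_mod_cast Nat.factorial_pos k
    have h3 : (0 : ℝ) < Nat.factorial n := by exact_mod_cast Nat.factorial_pos n
    have h4 : (0 : ℝ) < Nat.factorial q := by exact_mod_cast Nat.factorial_pos q
    generalize Real.Gamma (((k + 2 + 2 * n + 2 * q : ℕ) : ℝ) + (α + 1 / 2) - (q + 1 : ℕ)) = g
    push_cast
    field_simp
    ring
  · rw [if_neg (by omega)]
    by_cases h' : 2 * n + 2 * q ≤ m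
    · have : m - 2 * n - 2 * q = 0 ∨ m - 2 * n - 2 * q = 1 := by omega
      rcases this with h | h <;> simp [h]
    · rw [if_neg h']; simp

lemma usd_shift (f : ℕ → ℝ) (N : ℕ) (h0 : f 0 = 0) (hN : f N = 0) :
    ∑ n ∈ Finset.range N, f (n + 1) = ∑ n ∈ Finset.range N, f n := by
  have h1 := Finset.sum_range_succ f N
  have h2 := Finset.sum_range_succ' f N
  rw [h0] at h2; rw [hN] at h1
  linarith

noncomputable def usdQ (α y : ℝ) (m : ℕ) : ℝ[X] :=
  ∑ n ∈ Finset.range (m + 1), ∑ q ∈ Finset.range (m + 1),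
    C (usdCf α m n q) * usdTm y (m - 2 * n - 2 * q) n

lemma usdL_add (α : ℝ) (p q : ℝ[X]) : usdL α (p + q) = usdL α p + usdL α q := by
  unfold usdL; simp only [derivative_add]; ring

lemma usdL_C_mul (α c : ℝ) (p : ℝ[X]) : usdL α (C c * p) = C c * usdL α p := by
  unfold usdL; simp only [derivative_C_mul]; ring

lemma usdL_sum (α : ℝ) {ι : Type*} (s : Finset ι) (f : ι → ℝ[X]) :
    usdL α (∑ i ∈ s, f i) = ∑ i ∈ s, usdL α (f i) := by
  classical
  induction s using Finset.induction_on with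
  | empty => simp [usdL]
  | insert a s ha ih => rw [Finset.sum_insert ha, Finset.sum_insert ha, usdL_add, ih]

lemma usdQ_ode {α : ℝ} (hα : -(1 / 2 : ℝ) < α) (y : ℝ) (m : ℕ) :
    usdL α (usdQ α y m) + C ((m : ℝ) * (m + 2 * α + 1)) * usdQ α y m = 0 := by
  apply Polynomial.funext
  intro u
  set a := y * (1 - 2 * u) with ha
  set A := 4 * (u * (1 - u)) with hA
  set B := 1 - y ^ 2 with hB
  set K : ℕ → ℕ → ℕ := fun n q => m - 2 * n - 2 * q with hK
  set cf := usdCf α m with hcf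
  have hL : (usdL α (usdQ α y m)).eval u = ∑ n ∈ Finset.range (m + 1), ∑ q ∈ Finset.range (m + 1),
      (cf n q * ((K n q : ℝ) * (K n q - 1)) * y ^ 2 * A * (a ^ (K n q - 2) * (B * A) ^ n)
       + cf n q * (4 * n * (n + α)) * B * (a ^ (K n q) * (B * A) ^ (n - 1))
       - cf n q * (2 * n * (2 * K n q + 1) + 4 * n * (n + α) + (2 * α + 2) * K n q) *
          (a ^ (K n q) * (B * A) ^ n)) := by
    unfold usdQ
    rw [usdL_sum, eval_finsetSum]
    refine Finset.sum_congr rfl fun n _ => ?_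
    rw [usdL_sum, eval_finsetSum]
    refine Finset.sum_congr rfl fun q _ => ?_
    rw [usdL_C_mul, eval_mul, eval_C, usdL_term]
    simp only [hK, hcf, ha, hA, hB]
    ring
  have hQ : (usdQ α y m).eval u = ∑ n ∈ Finset.range (m + 1), ∑ q ∈ Finset.range (m + 1),
      cf n q * (a ^ (K n q) * (B * A) ^ n) := by
    unfold usdQ
    simp only [eval_finsetSum, usdTm, hcf, ha, hA, hB, hK]
    simp
  have hS1 : ∑ n ∈ Finset.range (m + 1), ∑ q ∈ Finset.range (m + 1),
      cf n q * (4 * n * (n + α)) * B * (a ^ (K n q) * (B * A) ^ (n - 1)) =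
      ∑ n ∈ Finset.range (m + 1), ∑ q ∈ Finset.range (m + 1),
      cf n q * ((K n q : ℝ) * (K n q - 1)) * B * (a ^ (K n q - 2) * (B * A) ^ n) := by
    rw [← usd_shift (fun n => ∑ q ∈ Finset.range (m + 1),
      cf n q * (4 * n * (n + α)) * B * (a ^ (K n q) * (B * A) ^ (n - 1)))]
    · refine Finset.sum_congr rfl fun n _ => Finset.sum_congr rfl fun q _ => ?_
      have := usdCf_shift_n hα m n q
      rw [show K (n + 1) q = K n q - 2 by simp only [hK]; omega]
      simp only [hcf, hK] at this ⊢
      push_cast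
      rw [this]
    · simp
    · refine Finset.sum_eq_zero fun q _ => ?_
      simp only [hcf, usdCf]
      rw [if_neg (by omega)]; simp
  have hS2 : ∑ n ∈ Finset.range (m + 1), ∑ q ∈ Finset.range (m + 1),
      cf n q * ((K n q : ℝ) * (K n q - 1)) * (a ^ (K n q - 2) * (B * A) ^ n) =
      ∑ n ∈ Finset.range (m + 1), ∑ q ∈ Finset.range (m + 1),
      cf n q * (-(4 * (q : ℝ) * (m + (α + 1 / 2) - q))) * (a ^ (K n q) * (B * A) ^ n) := by
    refine Finset.sum_congr rfl fun n _ => ?_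
    rw [← usd_shift (fun q =>
      cf n q * (-(4 * (q : ℝ) * (m + (α + 1 / 2) - q))) * (a ^ (K n q) * (B * A) ^ n))]
    · refine Finset.sum_congr rfl fun q _ => ?_
      have := usdCf_shift_q hα m n q
      rw [show K n (q + 1) = K n q - 2 by simp only [hK]; omega]
      simp only [hcf, hK] at this ⊢
      push_cast
      rw [this]
    · simp
    · simp only [hcf, usdCf]
      rw [if_neg (by omega)]; simp
  rw [eval_add, eval_mul, eval_C, eval_zero, hL, hQ]
  simp only [Finset.sum_add_distrib, Finset.sum_sub_distrib]
  rw [hS1]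
  have hS3 : ∑ n ∈ Finset.range (m + 1), ∑ q ∈ Finset.range (m + 1),
      cf n q * ((K n q : ℝ) * (K n q - 1)) * y ^ 2 * A * (a ^ (K n q - 2) * (B * A) ^ n) +
      ∑ n ∈ Finset.range (m + 1), ∑ q ∈ Finset.range (m + 1),
      cf n q * ((K n q : ℝ) * (K n q - 1)) * B * (a ^ (K n q - 2) * (B * A) ^ n) =
      ∑ n ∈ Finset.range (m + 1), ∑ q ∈ Finset.range (m + 1),
      cf n q * ((K n q : ℝ) * (K n q - 1)) * (a ^ (K n q - 2) * (B * A) ^ n) -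
      ∑ n ∈ Finset.range (m + 1), ∑ q ∈ Finset.range (m + 1),
      cf n q * ((K n q : ℝ) * (K n q - 1)) * (a ^ (K n q) * (B * A) ^ n) := by
    simp only [← Finset.sum_add_distrib, ← Finset.sum_sub_distrib]
    refine Finset.sum_congr rfl fun n _ => Finset.sum_congr rfl fun q _ => ?_
    rcases hkk : K n q with _ | _ | k
    · simp
    · simp
    · have : a ^ (k + 2) = a ^ k * a ^ 2 := pow_add _ _ _
      rw [show k + 1 + 1 = k + 2 from rfl, this, Nat.add_sub_cancel]
      have hr : y ^ 2 * A + B = 1 - a ^ 2 := by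
        rw [ha, hA, hB]; ring
      linear_combination (cf n q * (((k + 2 : ℕ) : ℝ) * ((k + 2 : ℕ) - 1)) * (a ^ k * (B * A) ^ n)) * hr
  rw [hS3, hS2, Finset.mul_sum]
  simp only [Finset.mul_sum, ← Finset.sum_add_distrib, ← Finset.sum_sub_distrib]
  refine Finset.sum_eq_zero fun n _ => Finset.sum_eq_zero fun q _ => ?_
  by_cases h : 2 * n + 2 * q ≤ m
  · have : (K n q : ℝ) = m - 2 * n - 2 * q := by
      simp only [hK]
      rw [Nat.sub_sub, Nat.cast_sub h]; push_cast; ring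
    rw [this]; ring
  · simp only [hcf, usdCf]
    rw [if_neg h]; simp

end USDpart4

section USDpart5
open Polynomial

noncomputable def usdQr (α x y : ℝ) (m : ℕ) : ℝ :=
  ∑ n ∈ Finset.range (m + 1), ∑ q ∈ Finset.range (m + 1),
    usdCf α m n q * ((x * y) ^ (m - 2 * n - 2 * q) * ((1 - x ^ 2) * (1 - y ^ 2)) ^ n)

lemma usdQr_comm (α x y : ℝ) (m : ℕ) : usdQr α x y m = usdQr α y x m := by
  unfold usdQr
  rw [mul_comm x y, mul_comm (1 - x ^ 2)]

lemma usdQ_eval (α x y : ℝ) (m : ℕ) : (usdQ α y m).eval ((1 - x) / 2) = usdQr α x y m := by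
  unfold usdQ usdQr
  simp only [eval_finsetSum, usdTm]
  refine Finset.sum_congr rfl fun n _ => Finset.sum_congr rfl fun q _ => ?_
  simp only [eval_mul, eval_C, eval_pow, eval_sub, eval_one, eval_X]
  rw [show y * (1 - 2 * ((1 - x) / 2)) = x * y by ring,
    show (1 - y ^ 2) * (4 * ((1 - x) / 2 * (1 - (1 - x) / 2))) = (1 - x ^ 2) * (1 - y ^ 2) by ring]

lemma usdQr_prod {α : ℝ} (hα : -(1 / 2 : ℝ) < α) (x y : ℝ) (m : ℕ) :
    usdQr α x y m * (poch (α + 1) m / (Nat.factorial m : ℝ)) ^ 2 =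
      usdQr α 1 1 m * (jacobiP α α m x * jacobiP α α m y) := by
  have h1 := usdL_eval hα (usdQ_ode hα y m) x
  have h2 := usdL_eval hα (usdQ_ode hα 1 m) y
  have e : ∀ z, (usdQ α z m).eval 0 = usdQr α 1 z m := by
    intro z; rw [← usdQ_eval]; norm_num
  rw [usdQ_eval, e] at h1 h2
  rw [usdQr_comm α y 1] at h2
  calc _ = (usdQr α x y m * (poch (α + 1) m / (Nat.factorial m : ℝ))) *
        (poch (α + 1) m / (Nat.factorial m : ℝ)) := by ring
    _ = (usdQr α 1 y m * (poch (α + 1) m / (Nat.factorial m : ℝ))) * jacobiP α α m x := by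
        rw [h1]; ring
    _ = _ := by rw [h2]; ring

lemma usdQ_lead (α : ℝ) (m : ℕ) : (usdQ α 1 m).coeff m = usdCf α m 0 0 * (-2) ^ m := by
  unfold usdQ
  rw [finsetSum_coeff, Finset.sum_eq_single 0]
  · rw [finsetSum_coeff, Finset.sum_eq_single 0]
    · simp only [usdTm, coeff_C_mul]
      congr 1
      have : (C (1:ℝ) * (1 - C 2 * X)) = (C (-2) * X + C 1 : ℝ[X]) := by
        simp; ring
      rw [this, pow_zero, mul_one, show m - 2 * 0 - 2 * 0 = m * 1 by omega]
      rw [show (C (-2 : ℝ) * X + C 1 : ℝ[X]) ^ (m * 1) = (C (-2 : ℝ) * X + C 1 : ℝ[X]) ^ m by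
        rw [mul_one]]
      have h := coeff_pow_of_natDegree_le (p := (C (-2 : ℝ) * X + C 1 : ℝ[X])) (m := m) (n := 1)
        natDegree_linear_le
      rw [mul_one] at h
      rw [h]
      simp [coeff_one]
    · intro q _ hq
      rw [coeff_C_mul]
      by_cases h : 2 * 0 + 2 * q ≤ m
      · rw [coeff_eq_zero_of_natDegree_lt, mul_zero]
        unfold usdTm
        rw [pow_zero, mul_one]
        have : (C (1:ℝ) * (1 - C 2 * X)) = (C (-2) * X + C 1 : ℝ[X]) := by
          simp; ring
        rw [this]
        calc _ ≤ (m - 2 * 0 - 2 * q) * (C (-2 : ℝ) * X + C 1 : ℝ[X]).natDegree := natDegree_pow_le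
          _ ≤ (m - 2 * 0 - 2 * q) * 1 := Nat.mul_le_mul_left _ natDegree_linear_le
          _ < m := by omega
      · rw [usdCf, if_neg h, zero_mul]
    · intro h; simp at h
  · intro n _ hn
    rw [finsetSum_coeff]
    refine Finset.sum_eq_zero fun q _ => ?_
    simp [usdTm, hn]
  · intro h; simp at h

lemma usdQr_one {α : ℝ} (hα : -(1 / 2 : ℝ) < α) (m : ℕ) :
    usdQr α 1 1 m * (poch ((m : ℝ) + α + α + 1) m * Real.Gamma (α + 1) * (Nat.factorial m : ℝ)) =
      4 ^ m * Real.Gamma ((m : ℝ) + (α + 1 / 2)) * poch (α + 1) m := by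
  have h := usdL_coeff_eq hα (usdQ_ode hα 1 m) m
  rw [usdQ_lead, coeff_zero_eq_eval_zero, show (0 : ℝ) = (1 - 1) / 2 by norm_num, usdQ_eval] at h
  have hp := poch_pos' (c := α + 1) (by linarith) m
  have h2 : (0 : ℝ) < Nat.factorial m := by exact_mod_cast Nat.factorial_pos m
  have hg := Real.Gamma_pos_of_pos (show 0 < α + 1 by linarith)
  rw [usdHc, usd_poch_neg_self, usdCf, if_pos (by omega)] at h
  simp only [mul_zero, Nat.sub_zero, pow_zero, Nat.factorial_zero, Nat.cast_zero, add_zero,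
    Nat.cast_one, sub_zero, mul_one] at h
  rw [show (4 : ℝ) ^ m = 2 ^ m * 2 ^ m by rw [← mul_pow]; norm_num]
  rw [show (-2 : ℝ) ^ m = (-1) ^ m * 2 ^ m by rw [← mul_pow]; norm_num] at h
  have hs : (-1 : ℝ) ^ m ≠ 0 := by positivity
  field_simp at h ⊢
  linear_combination -h

lemma usd_final {α : ℝ} (hα : -(1 / 2 : ℝ) < α) (x y : ℝ) (m : ℕ) :
    (Rn α α m)⁻¹ * (jacobiP α α m x * jacobiP α α m y) =
      Real.Gamma (α + 1) / Real.Gamma (α + 3 / 2) * (m + (α + 1 / 2)) * usdQr α x y m := by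
  have h1 := usdQr_prod hα x y m
  have h2 := usdQr_one hα m
  have hm : (0 : ℝ) ≤ m := by positivity
  have hp := poch_pos' (c := α + 1) (by linarith) m
  have hp2 := poch_pos' (c := (m : ℝ) + α + α + 1) (by linarith) m
  have hf : (0 : ℝ) < Nat.factorial m := by exact_mod_cast Nat.factorial_pos m
  have hg := Real.Gamma_pos_of_pos (show 0 < α + 1 by linarith)
  have hg3 := Real.Gamma_pos_of_pos (show 0 < α + 3 / 2 by linarith)
  have hgm := Real.Gamma_pos_of_pos (show 0 < (m : ℝ) + (α + 1 / 2) by linarith)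
  have hg2 := Real.Gamma_pos_of_pos (show 0 < α + α + 2 by linarith)
  have hg4 := Real.Gamma_pos_of_pos (show 0 < α + α + m + 1 by linarith)
  have hR : usdQr α 1 1 m = 4 ^ m * Real.Gamma ((m : ℝ) + (α + 1 / 2)) * poch (α + 1) m /
      (poch ((m : ℝ) + α + α + 1) m * Real.Gamma (α + 1) * (Nat.factorial m : ℝ)) := by
    rw [eq_div_iff (by positivity), h2]
  -- duplication
  have d1 := Real.Gamma_mul_Gamma_add_half ((m : ℝ) + (α + 1 / 2))
  have d2 := Real.Gamma_mul_Gamma_add_half (α + 1)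
  have e1 := usd_Gamma_add (c := α + 1) (by linarith) m
  have e2 := usd_Gamma_add (c := (m : ℝ) + α + α + 1) (by linarith) m
  rw [show (m : ℝ) + (α + 1 / 2) + 1 / 2 = α + 1 + m by ring, e1,
    show 2 * ((m : ℝ) + (α + 1 / 2)) = m + α + α + 1 + m by ring, e2,
    show (m : ℝ) + α + α + 1 = α + α + m + 1 by ring,
    show (1 - (α + α + m + 1 + m) : ℝ) = -(2 * α) - (2 * m : ℕ) by push_cast; ring,
    Real.rpow_sub_natCast (by norm_num)] at d1
  rw [show α + 1 + 1 / 2 = α + 3 / 2 by ring, show 2 * (α + 1) = α + α + 2 by ring,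
    show (1 - (α + α + 2) : ℝ) = -(2 * α) - (1 : ℕ) by push_cast; ring,
    Real.rpow_sub_natCast (by norm_num)] at d2
  rw [show (m : ℝ) + α + α + 1 = α + α + m + 1 by ring] at hR hp2
  have hprod : jacobiP α α m x * jacobiP α α m y = usdQr α x y m *
      (poch (α + 1) m / (Nat.factorial m : ℝ)) ^ 2 / usdQr α 1 1 m := by
    rw [eq_div_iff (by rw [hR]; positivity), h1]; ring
  rw [hprod, hR, Rn]
  rw [pow_mul] at d1
  norm_num at d1 d2
  have h2a : (0 : ℝ) < 2 ^ (-(2 * α)) := by positivity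
  have hpi : 0 < Real.sqrt Real.pi := by positivity
  have hne : 2 * (m : ℝ) + α + α + 1 ≠ 0 := by linarith
  generalize Real.sqrt Real.pi = w at *
  generalize (2 : ℝ) ^ (-(2 * α)) = v at *
  generalize usdQr α x y m = Q at *
  generalize Real.Gamma ((m : ℝ) + (α + 1 / 2)) = G1 at *
  generalize Real.Gamma (α + 3 / 2) = G3 at *
  generalize Real.Gamma (α + 1) = G at *
  generalize Real.Gamma (α + α + 2) = G2 at *
  generalize Real.Gamma (α + α + m + 1) = G4 at *
  generalize poch (α + 1) m = P at *
  generalize poch (α + α + m + 1) m = P2 at *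
  have hG2 : G2 = G * G3 * 2 / (v * w) := by
    field_simp
    field_simp at d2
    linarith
  have hG4 : G4 = G1 * (P * G) * 4 ^ m / (P2 * v * w) := by
    field_simp
    field_simp at d1
    linarith
  rw [hG2, hG4]
  field_simp
  ring

end USDpart5

section USDpart6

noncomputable def usdF (α r x y : ℝ) (i : (ℕ × ℕ) × ℕ) : ℝ :=
  (x * y) ^ i.1.2 / ((Nat.factorial i.1.2 : ℝ) * (Nat.factorial i.1.1 : ℝ) *
      Real.Gamma (α + (i.1.1 : ℝ) + 1)) *
    ((1 - x ^ 2) * (1 - y ^ 2) / 4) ^ i.1.1 *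
    ((2 : ℝ) ^ (2 * (i.1.1 : ℝ) + (i.1.2 : ℝ) + α + 1 / 2) * ((-1) ^ i.2 *
      (Real.Gamma ((i.2 : ℝ) + (2 * (i.1.1 : ℝ) + (i.1.2 : ℝ) + α + 1 / 2)) /
        (Nat.factorial i.2 : ℝ)))) *
    ((2 * (i.2 : ℝ) + (2 * (i.1.1 : ℝ) + (i.1.2 : ℝ) + α + 1 / 2)) *
      usdG (2 * (i.2 : ℝ) + (2 * (i.1.1 : ℝ) + (i.1.2 : ℝ) + α + 1 / 2)) r)

lemma usdF_tsum {α r : ℝ} (hα : -(1 / 2 : ℝ) < α) (hr : 0 < r) (x y : ℝ) (nk : ℕ × ℕ) :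
    Real.Gamma ((2 * (nk.1 : ℝ) + (nk.2 : ℝ) + α + 1 / 2) + 1) * (x * y) ^ nk.2 /
              ((Nat.factorial nk.2 : ℝ) * (Nat.factorial nk.1 : ℝ) * Real.Gamma (α + (nk.1 : ℝ) + 1)) *
            ((1 - x ^ 2) * (1 - y ^ 2) / 4) ^ nk.1 *
            conv fT1 (fC (2 * (nk.1 : ℝ) + (nk.2 : ℝ) + α + 1 / 2)) r =
      ∑' q : ℕ, usdF α r x y (nk, q) := by
  obtain ⟨n, k⟩ := nk
  dsimp only
  have hn : (0 : ℝ) ≤ n := by positivity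
  have hk : (0 : ℝ) ≤ k := by positivity
  have hh : 0 < 2 * (n : ℝ) + (k : ℝ) + α + 1 / 2 := by linarith
  have hg := Real.Gamma_pos_of_pos hh
  rw [usd_conv hh hr, ← tsum_mul_left]
  refine tsum_congr fun q => ?_
  simp only [usdF, usdC]
  rw [Real.Gamma_add_one hh.ne']
  generalize 2 * (n : ℝ) + (k : ℝ) + α + 1 / 2 = h at *
  generalize usdG (2 * q + h) r = w
  generalize Real.Gamma (α + n + 1) = w2
  generalize Real.Gamma (q + h) = w3
  field_simp

lemma usd_inv_Gamma {α : ℝ} (hα : -(1 / 2 : ℝ) < α) (n : ℕ) :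
    1 / Real.Gamma (α + n + 1) ≤ 2 ^ n * (1 / Real.Gamma (α + 1)) := by
  have hg := Real.Gamma_pos_of_pos (show 0 < α + 1 by linarith)
  have hp : ∀ n : ℕ, 1 ≤ 2 ^ n * poch (α + 1) n := by
    intro n
    induction n with
    | zero => simp [poch_zero']
    | succ n ih =>
      rw [poch_succ', pow_succ]
      have hn : (0 : ℝ) ≤ n := by positivity
      have : 1 ≤ 2 * (α + 1 + n) := by linarith
      calc (1 : ℝ) ≤ (2 ^ n * poch (α + 1) n) * (2 * (α + 1 + n)) := one_le_mul_of_one_le_of_one_le ih this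
        _ = _ := by ring
  rw [show α + n + 1 = α + 1 + n by ring, usd_Gamma_add (by linarith)]
  have := poch_pos' (c := α + 1) (by linarith) n
  rw [div_le_iff₀ (by positivity)]
  calc (1 : ℝ) ≤ 2 ^ n * poch (α + 1) n := hp n
    _ = _ := by field_simp

lemma usdF_summable {α t : ℝ} (hα : -(1 / 2 : ℝ) < α) (ht : 0 < t) {x y : ℝ}
    (hx : x ∈ Set.Ioo (-1 : ℝ) 1) (hy : y ∈ Set.Ioo (-1 : ℝ) 1) :
    Summable (usdF α (1 / (2 * t)) x y) := by
  obtain ⟨γ, hγ⟩ : ∃ γ, γ = α + 1 / 2 := ⟨_, rfl⟩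
  have hγ0 : 0 < γ := by linarith
  obtain ⟨C, hC0, hC⟩ := usd_bd (c := γ + 1) (D := 8) (t := t) (by linarith) (by norm_num) ht
  have hg := Real.Gamma_pos_of_pos (show 0 < α + 1 by linarith)
  have hgγ := Real.Gamma_pos_of_pos hγ0
  have hx2 : 0 ≤ 1 - x ^ 2 := by nlinarith [hx.1, hx.2]
  have hy2 : 0 ≤ 1 - y ^ 2 := by nlinarith [hy.1, hy.2]
  have hX0 : 0 ≤ (1 - x ^ 2) * (1 - y ^ 2) / 4 := by positivity
  have hX1 : (1 - x ^ 2) * (1 - y ^ 2) / 4 ≤ 1 := by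
    have : (1 - x ^ 2) * (1 - y ^ 2) ≤ 1 :=
      mul_le_one₀ (by nlinarith [sq_nonneg x]) hy2 (by nlinarith [sq_nonneg y])
    linarith
  have hxy : |x * y| ≤ 1 := by
    rw [abs_mul]
    exact mul_le_one₀ (abs_le.2 ⟨hx.1.le, hx.2.le⟩) (abs_nonneg _) (abs_le.2 ⟨hy.1.le, hy.2.le⟩)
  set M : ℝ := (1 / Real.Gamma (α + 1)) * 2 ^ γ * Real.Gamma γ * (1 + γ) *
    (1 / Real.sqrt (2 * Real.pi * (1 / (2 * t)))) with hM
  have hM0 : 0 ≤ M := by positivity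
  have hgeo : Summable fun i : (ℕ × ℕ) × ℕ => ((1 / 2 : ℝ) ^ i.1.1 * (1 / 2) ^ i.1.2) * (1 / 2) ^ i.2 := by
    have h1 : Summable fun n : ℕ => (1 / 2 : ℝ) ^ n := summable_geometric_two
    have h2 := h1.mul_of_nonneg h1 (fun _ => by positivity) (fun _ => by positivity)
    exact h2.mul_of_nonneg h1 (fun _ => by positivity) (fun _ => by positivity)
  refine Summable.of_norm_bounded (hgeo.mul_left (M * C)) ?_
  rintro ⟨⟨n, k⟩, q⟩
  have hfac : ∀ j : ℕ, (1 : ℝ) ≤ Nat.factorial j := fun j => by exact_mod_cast Nat.factorial_pos j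
  obtain ⟨m, hm⟩ : ∃ m, m = 2 * n + k + 2 * q := ⟨_, rfl⟩
  have hmR : (m : ℝ) = 2 * n + k + 2 * q := by rw [hm]; push_cast; ring
  have hn : (0 : ℝ) ≤ n := by positivity
  have hGn := Real.Gamma_pos_of_pos (show 0 < α + n + 1 by linarith)
  -- factor bounds
  have b1 : |(x * y) ^ k / ((Nat.factorial k : ℝ) * (Nat.factorial n : ℝ) * Real.Gamma (α + n + 1))| ≤
      2 ^ m * (1 / Real.Gamma (α + 1)) := by
    rw [abs_div, abs_pow, abs_of_pos (a := (Nat.factorial k : ℝ) * _ * _)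
      (by have := hfac k; have := hfac n; positivity)]
    calc _ ≤ 1 / (1 * 1 * Real.Gamma (α + n + 1)) := by
          gcongr
          · exact pow_le_one₀ (abs_nonneg _) hxy
          · exact hfac k
          · exact hfac n
      _ ≤ 2 ^ n * (1 / Real.Gamma (α + 1)) := by rw [one_mul, one_mul]; exact usd_inv_Gamma hα n
      _ ≤ _ := by
          gcongr
          · norm_num
          · omega
  have b2 : |((1 - x ^ 2) * (1 - y ^ 2) / 4) ^ n| ≤ 1 := by
    rw [abs_of_nonneg (by positivity)]
    exact pow_le_one₀ hX0 hX1
  have b3 : (2 : ℝ) ^ (2 * (n : ℝ) + (k : ℝ) + α + 1 / 2) ≤ 2 ^ γ * 2 ^ m := by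
    rw [show 2 * (n : ℝ) + (k : ℝ) + α + 1 / 2 = γ + (2 * n + k : ℕ) by rw [hγ]; push_cast; ring,
      Real.rpow_add_natCast (by norm_num)]
    gcongr
    · norm_num
    · omega
  have b4 : Real.Gamma ((q : ℝ) + (2 * (n : ℝ) + (k : ℝ) + α + 1 / 2)) ≤ poch (γ + 1) m * Real.Gamma γ := by
    rw [show (q : ℝ) + (2 * (n : ℝ) + (k : ℝ) + α + 1 / 2) = γ + (2 * n + k + q : ℕ) by
      rw [hγ]; push_cast; ring, usd_Gamma_add hγ0]
    gcongr
    exact (poch_le_succ_left hγ0 _).trans (poch_mono_right hγ0 (by omega))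
  have hG0 : 0 < Real.Gamma ((q : ℝ) + (2 * (n : ℝ) + (k : ℝ) + α + 1 / 2)) :=
    Real.Gamma_pos_of_pos (by
      have : (0 : ℝ) ≤ k := by positivity
      have : (0 : ℝ) ≤ q := by positivity
      linarith)
  have b5 : |(-1 : ℝ) ^ q * (Real.Gamma ((q : ℝ) + (2 * (n : ℝ) + (k : ℝ) + α + 1 / 2)) /
        (Nat.factorial q : ℝ))| ≤ poch (γ + 1) m * Real.Gamma γ := by
    rw [abs_mul, abs_pow, abs_neg, abs_one, one_pow, one_mul, abs_of_nonneg (by positivity)]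
    exact (div_le_self hG0.le (hfac q)).trans b4
  have hmγ : 2 * (q : ℝ) + (2 * (n : ℝ) + (k : ℝ) + α + 1 / 2) = m + γ := by
    rw [hmR, hγ]; ring
  have hm0 : (0 : ℝ) ≤ m := by positivity
  have b6 : |(m : ℝ) + γ| ≤ 2 ^ m * (1 + γ) := by
    rw [abs_of_pos (by linarith)]
    have h1 : (m : ℝ) ≤ 2 ^ m := by exact_mod_cast (Nat.lt_two_pow_self).le
    have h2 : (1 : ℝ) ≤ 2 ^ m := one_le_pow₀ (by norm_num)
    nlinarith
  have b7 : |usdG (m + γ) (1 / (2 * t))| ≤ Real.exp (-t * (m : ℝ) ^ 2) *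
      (1 / Real.sqrt (2 * Real.pi * (1 / (2 * t)))) := by
    unfold usdG
    rw [abs_of_nonneg (by positivity), div_eq_mul_one_div]
    gcongr
    rw [show -((m : ℝ) + γ) ^ 2 / (2 * (1 / (2 * t))) = -t * (m + γ) ^ 2 by field_simp]
    have : (m : ℝ) ^ 2 ≤ (m + γ) ^ 2 := by gcongr; linarith
    nlinarith
  have hpp := poch_pos' (c := γ + 1) (by linarith) m
  rw [Real.norm_eq_abs]
  simp only [usdF]
  rw [hmγ, abs_mul, abs_mul, abs_mul, abs_mul _ (_ * (_ / _)), abs_mul (_ + _),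
    abs_of_pos (a := (2 : ℝ) ^ (_ : ℝ)) (by positivity)]
  calc _ ≤ (2 ^ m * (1 / Real.Gamma (α + 1))) * 1 * ((2 ^ γ * 2 ^ m) * (poch (γ + 1) m * Real.Gamma γ))
        * ((2 ^ m * (1 + γ)) * (Real.exp (-t * (m : ℝ) ^ 2) *
      (1 / Real.sqrt (2 * Real.pi * (1 / (2 * t)))))) := by gcongr
    _ = M * (poch (γ + 1) m * 8 ^ m * Real.exp (-t * (m : ℝ) ^ 2)) := by
        rw [hM, show (8 : ℝ) ^ m = 2 ^ m * 2 ^ m * 2 ^ m by rw [← mul_pow, ← mul_pow]; norm_num]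
        ring
    _ ≤ M * (C * (1 / 2) ^ m) := mul_le_mul_of_nonneg_left (hC m) hM0
    _ ≤ M * (C * ((1 / 2 : ℝ) ^ n * (1 / 2) ^ k * (1 / 2) ^ q)) := by
        gcongr
        rw [← pow_add, ← pow_add]
        exact pow_le_pow_of_le_one (by norm_num) (by norm_num) (by omega)
    _ = _ := by ring

def usdS (m : ℕ) : Finset ((ℕ × ℕ) × ℕ) :=
  ((Finset.range (m + 1) ×ˢ Finset.range (m + 1)) ×ˢ Finset.range (m + 1)).filter
    fun i => 2 * i.1.1 + i.1.2 + 2 * i.2 = m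

lemma usd_mem_S (m : ℕ) (i : (ℕ × ℕ) × ℕ) : i ∈ usdS m ↔ 2 * i.1.1 + i.1.2 + 2 * i.2 = m := by
  simp only [usdS, Finset.mem_filter, Finset.mem_product, Finset.mem_range]
  omega

lemma usd_fiber {α : ℝ} (r x y : ℝ) (m : ℕ) :
    ∑ i ∈ usdS m, usdF α r x y i =
      2 ^ (α + 1 / 2 : ℝ) * ((m + (α + 1 / 2)) * usdG (m + (α + 1 / 2)) r) * usdQr α x y m := by
  unfold usdS usdQr
  rw [Finset.sum_filter, Finset.sum_product, Finset.sum_product, Finset.mul_sum]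
  refine Finset.sum_congr rfl fun n _ => ?_
  rw [Finset.sum_comm, Finset.mul_sum]
  refine Finset.sum_congr rfl fun q _ => ?_
  by_cases h : 2 * n + 2 * q ≤ m
  · rw [Finset.sum_eq_single (m - 2 * n - 2 * q)]
    · obtain ⟨k, rfl⟩ : ∃ k, m = 2 * n + k + 2 * q := ⟨m - 2 * n - 2 * q, by omega⟩
      rw [show 2 * n + k + 2 * q - 2 * n - 2 * q = k by omega, if_pos (by dsimp only)]
      simp only [usdF, usdCf]
      rw [if_pos h, show 2 * n + k + 2 * q - 2 * n - 2 * q = k by omega]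
      rw [show 2 * (q : ℝ) + (2 * (n : ℝ) + (k : ℝ) + α + 1 / 2) =
        ((2 * n + k + 2 * q : ℕ) : ℝ) + (α + 1 / 2) by push_cast; ring,
        show (q : ℝ) + (2 * (n : ℝ) + (k : ℝ) + α + 1 / 2) =
        ((2 * n + k + 2 * q : ℕ) : ℝ) + (α + 1 / 2) - q by push_cast; ring,
        show 2 * (n : ℝ) + (k : ℝ) + α + 1 / 2 = (α + 1 / 2) + (2 * n + k : ℕ) by push_cast; ring,
        Real.rpow_add_natCast (by norm_num), div_pow, pow_add, pow_mul]
      norm_num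
      field_simp
    · intro k _ hk
      rw [if_neg (by dsimp only; omega)]
    · intro hk
      exact absurd (Finset.mem_range.2 (by omega)) hk
  · rw [usdCf, if_neg h, zero_mul, mul_zero]
    refine Finset.sum_eq_zero fun k _ => ?_
    rw [if_neg (by dsimp only; omega)]

end USDpart6


/-- Expansion of the ultraspherical Jacobi semigroup density (`β = α > -1/2`): with
`γ = α+1/2`, `λ_m = m(m+2α+1)`, `ν(n,k,α) = 2n+k+α+1/2` and
`K_α = Γ(α+1)/(2^{α+1/2}Γ(α+3/2))`, for every `t > 0` and `x, y ∈ (-1,1)`,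
`∑_{m≥0} R_m⁻¹ e^{-λ_m t} P_m^{α,α}(x) P_m^{α,α}(y)
  = √π K_α (e^{γ²t}/√t) ∑_{n,k≥0} [Γ(ν(n,k,α)+1)(xy)^k/(k! n! Γ(α+n+1))]
      [(1-x²)(1-y²)/4]ⁿ (f_{T₁} ⋆ f_{C_{ν(n,k,α)}})(1/(2t))`. -/
theorem ultraspherical_semigroup_density (α : ℝ) (hα : -(1 / 2 : ℝ) < α)
    (γ Kα : ℝ) (hγ : γ = α + 1 / 2)
    (hK : Kα = Real.Gamma (α + 1) / (2 ^ (α + 1 / 2 : ℝ) * Real.Gamma (α + 3 / 2)))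
    (t : ℝ) (ht : 0 < t) (x y : ℝ) (hx : x ∈ Set.Ioo (-1 : ℝ) 1) (hy : y ∈ Set.Ioo (-1 : ℝ) 1) :
    ∑' m : ℕ,
        (Rn α α m)⁻¹ * Real.exp (-((m : ℝ) * ((m : ℝ) + 2 * α + 1)) * t) *
          jacobiP α α m x * jacobiP α α m y =
      Real.sqrt Real.pi * Kα * (Real.exp (γ ^ 2 * t) / Real.sqrt t) *
        ∑' nk : ℕ × ℕ,
          Real.Gamma ((2 * (nk.1 : ℝ) + (nk.2 : ℝ) + α + 1 / 2) + 1) * (x * y) ^ nk.2 /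
              ((Nat.factorial nk.2 : ℝ) * (Nat.factorial nk.1 : ℝ) * Real.Gamma (α + (nk.1 : ℝ) + 1)) *
            ((1 - x ^ 2) * (1 - y ^ 2) / 4) ^ nk.1 *
            conv fT1 (fC (2 * (nk.1 : ℝ) + (nk.2 : ℝ) + α + 1 / 2)) (1 / (2 * t)) := by
  have hr : 0 < 1 / (2 * t) := by positivity
  have hs := usdF_summable hα ht hx hy
  have hL : ∀ m : ℕ, (Rn α α m)⁻¹ * Real.exp (-((m : ℝ) * ((m : ℝ) + 2 * α + 1)) * t) *
          jacobiP α α m x * jacobiP α α m y =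
      Real.sqrt Real.pi * Kα * (Real.exp (γ ^ 2 * t) / Real.sqrt t) *
        ∑ i ∈ usdS m, usdF α (1 / (2 * t)) x y i := by
    intro m
    rw [usd_fiber]
    have h := usd_final hα x y m
    have hg3 := Real.Gamma_pos_of_pos (show 0 < α + 3 / 2 by linarith)
    have e1 : usdG (m + (α + 1 / 2)) (1 / (2 * t)) =
        Real.exp (-((m : ℝ) + (α + 1 / 2)) ^ 2 * t) * Real.sqrt t / Real.sqrt Real.pi := by
      unfold usdG
      rw [show 2 * Real.pi * (1 / (2 * t)) = Real.pi / t by field_simp,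
        Real.sqrt_div Real.pi_pos.le, div_div_eq_mul_div]
      congr 3
      field_simp
    have e2 : Real.exp (-((m : ℝ) * ((m : ℝ) + 2 * α + 1)) * t) =
        Real.exp (γ ^ 2 * t) * Real.exp (-((m : ℝ) + (α + 1 / 2)) ^ 2 * t) := by
      rw [← Real.exp_add, hγ]
      congr 1
      ring
    have ht' : 0 < Real.sqrt t := Real.sqrt_pos.2 ht
    have hpi : 0 < Real.sqrt Real.pi := Real.sqrt_pos.2 Real.pi_pos
    have h2 : (0 : ℝ) < 2 ^ (α + 1 / 2 : ℝ) := by positivity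
    calc _ = Real.exp (-((m : ℝ) * ((m : ℝ) + 2 * α + 1)) * t) *
          ((Rn α α m)⁻¹ * (jacobiP α α m x * jacobiP α α m y)) := by ring
      _ = _ := by
        rw [h, e1, e2, hK]
        field_simp
  rw [tsum_congr hL, tsum_mul_left]
  congr 1
  rw [← usd_regroup _ hs (fun i => 2 * i.1.1 + i.1.2 + 2 * i.2) usdS (fun m i => usd_mem_S m i),
    hs.tsum_prod]
  exact tsum_congr fun nk => (usdF_tsum hα hr x y nk).symm
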